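/- arXiv:1805.12159 — 15 statements merged into one kernel-verified Lean document; each statement's English description precedes it below -/
import Mathlib

section
/- Let G be a finite group. Then the commutator subgroup G' of G is quotient solitary, i.e. G' ∈ QSol(G). -/
/-! If `G ⧸ K` is isomorphic to the abelianization of `G`, then it is commutative, so `K` contains
the commutator subgroup. Both subgroups have the same index in the finite group `G`, hence the same
order, and so they are equal. -/

/-- A normal subgroup `H` of a group `G` is *quotient solitary* if for every normal
subgroup `K` of `G`, `G/K ≅ G/H` implies `K = H`. -/
def IsQuotientSolitary {G : Type*} [Group G] (H : Subgroup G) : Prop :=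
  ∃ hH : H.Normal, ∀ (K : Subgroup G) (hK : K.Normal),
    (letI := hH; letI := hK; Nonempty ((G ⧸ K) ≃* (G ⧸ H))) → K = H

/-- The commutator subgroup of a finite group is quotient solitary. -/
theorem commutator_isQuotientSolitary {G : Type*} [Group G] [Finite G] :
    IsQuotientSolitary (commutator G) := by
  refine ⟨inferInstance, fun K hK ⟨e⟩ => ?_⟩
  have hcomm : IsMulCommutative (G ⧸ K) := by
    refine ⟨⟨fun a b => e.injective ?_⟩⟩
    rw [map_mul, map_mul]
    -- the quotient by the commutator subgroup is the abelianization
    exact mul_comm (G := Abelianization G) (e a) (e b)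
  have hle : commutator G ≤ K := Subgroup.Normal.quotient_commutative_iff_commutator_le.mp hcomm
  have hindex : (commutator G).index = K.index := (Nat.card_congr e.toEquiv).symm
  have hcard : Nat.card K = Nat.card (commutator G) := by
    have h₁ := K.card_mul_index
    rw [← hindex, ← (commutator G).card_mul_index] at h₁
    exact Nat.eq_of_mul_eq_mul_right
      (Nat.pos_of_ne_zero Subgroup.index_ne_zero_of_finite) h₁
  exact (Subgroup.eq_of_le_of_card_ge hle hcard.le).symm
end

section
/- Every finite elementary abelian p-group is quotient solitary free, i.e. its only quotient solitary subgroups are the trivial subgroup and the whole group. -/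
/-- Automorphic images have isomorphic quotients, so a quotient solitary subgroup is characteristic. -/
theorem IsQuotientSolitary.map_eq {G : Type*} [Group G] {H : Subgroup G}
    (hH : IsQuotientSolitary H) (e : G ≃* G) : H.map (e : G →* G) = H := by
  obtain ⟨hN, h⟩ := hH
  have hK : (H.map (e : G →* G)).Normal := hN.map _ e.surjective
  exact h _ hK ⟨(QuotientGroup.congr H (H.map (e : G →* G)) e rfl).symm⟩

/-- A proper nonzero subspace is moved by some transvection. -/
theorem exists_transvection_apply_notMem {K V : Type*} [Field K] [AddCommGroup V] [Module K V]
    (W : Submodule K V) {h g : V} (hW : h ∈ W) (h0 : h ≠ 0) (hg : g ∉ W) :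
    ∃ e : V ≃ₗ[K] V, e h ∉ W := by
  have hspan : h ∉ Submodule.span K {g} := by
    rw [Submodule.mem_span_singleton]
    rintro ⟨c, rfl⟩
    have hc : c ≠ 0 := by rintro rfl; simp at h0
    exact hg ((W.smul_mem_iff hc).1 hW)
  obtain ⟨f, hf, hle⟩ := Submodule.exists_le_ker_of_notMem hspan
  have hfg : f g = 0 := hle (Submodule.mem_span_singleton_self g)
  refine ⟨LinearEquiv.transvection hfg, fun hmem => hg ?_⟩
  rw [LinearEquiv.transvection.apply] at hmem
  exact (W.smul_mem_iff hf).1 ((W.add_mem_iff_right hW).1 hmem)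

/-- Every finite elementary abelian p-group is quotient solitary free. -/
theorem elementaryAbelian_quotientSolitaryFree {G : Type*} [CommGroup G] [Finite G]
    (p : ℕ) (hp : p.Prime) (horder : ∀ x : G, x ≠ 1 → orderOf x = p)
    (H : Subgroup G) (hH : IsQuotientSolitary H) :
    H = ⊥ ∨ H = ⊤ := by
  by_contra! hne
  obtain ⟨h, hhH, h1⟩ := (Subgroup.bot_or_exists_ne_one H).resolve_left hne.1
  obtain ⟨g, hg⟩ : ∃ g, g ∉ H := by
    by_contra! hall
    exact hne.2 ((Subgroup.eq_top_iff' H).2 hall)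
  have : Fact p.Prime := ⟨hp⟩
  have hpow : ∀ x : G, x ^ p = 1 := fun x => by
    by_cases hx : x = 1
    · simp [hx]
    · rw [← horder x hx, pow_orderOf_eq_one]
  let _ : Module (ZMod p) (Additive G) :=
    AddCommGroup.zmodModule fun x => congrArg Additive.ofMul (hpow x.toMul)
  -- Subgroups of `G` are definitionally subspaces of `Additive G` on underlying sets, so the
  -- membership facts about `h` and `g` transfer unchanged.
  obtain ⟨e, he⟩ := exists_transvection_apply_notMem
    (AddSubgroup.toZModSubmodule p (Subgroup.toAddSubgroup H))
    (h := Additive.ofMul h) (g := Additive.ofMul g) hhH h1 hg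
  let φ : G ≃* G := AddEquiv.toMultiplicative e.toAddEquiv
  have hφ : φ h ∈ H.map (φ : G →* G) := Subgroup.mem_map_of_mem _ hhH
  rw [hH.map_eq φ] at hφ
  exact he hφ
end

section
/- Let G be a finite group and let H₁ and H₂ be quotient solitary normal subgroups of G. Then H₁ ∩ H₂ is a quotient solitary normal subgroup of G. -/
lemma IsQuotientSolitary.ker_eq {G : Type*} [Group G] {H : Subgroup G} [hH : H.Normal]
    (h : IsQuotientSolitary H) (g : G →* G ⧸ H) (hg : Function.Surjective g) : g.ker = H :=
  h.2 g.ker inferInstance ⟨QuotientGroup.quotientKerEquivOfSurjective g hg⟩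

/-- The intersection of two quotient solitary normal subgroups of a finite group is
quotient solitary. -/
theorem isQuotientSolitary_inf {G : Type*} [Group G] [Finite G]
    (H₁ H₂ : Subgroup G) (h₁ : IsQuotientSolitary H₁) (h₂ : IsQuotientSolitary H₂) :
    IsQuotientSolitary (H₁ ⊓ H₂) := by
  have n₁ : H₁.Normal := h₁.1
  have n₂ : H₂.Normal := h₂.1
  refine ⟨inferInstance, fun K hK ⟨φ⟩ => ?_⟩
  let f : G →* G ⧸ (H₁ ⊓ H₂) := φ.toMonoidHom.comp (QuotientGroup.mk' K)
  have hf : Function.Surjective f := φ.surjective.comp (QuotientGroup.mk'_surjective K)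
  have hfK : ∀ x, f x = 1 ↔ x ∈ K := fun x => by simp [f]
  have key : ∀ H : Subgroup G, ∀ [H.Normal], IsQuotientSolitary H → ∀ hle : H₁ ⊓ H₂ ≤ H,
      ∀ x y : G, f x = (y : G ⧸ (H₁ ⊓ H₂)) → (x ∈ H ↔ y ∈ H) := by
    intro H _ h hle x y hxy
    let p : G ⧸ (H₁ ⊓ H₂) →* G ⧸ H := QuotientGroup.map _ H (MonoidHom.id G) hle
    have hp : Function.Surjective p := fun z => by
      obtain ⟨z, rfl⟩ := QuotientGroup.mk_surjective z
      exact ⟨(z : G ⧸ (H₁ ⊓ H₂)), rfl⟩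
    have e := h.ker_eq (p.comp f) (hp.comp hf)
    rw [← QuotientGroup.eq_one_iff (N := H) y]
    conv_lhs => rw [← e]
    rw [MonoidHom.mem_ker, MonoidHom.comp_apply, hxy]
    rfl
  ext x
  obtain ⟨y, hy⟩ := QuotientGroup.mk_surjective (f x)
  rw [← hfK, ← hy, QuotientGroup.eq_one_iff, Subgroup.mem_inf, Subgroup.mem_inf,
    key H₁ h₁ inf_le_left x y hy.symm, key H₂ h₂ inf_le_right x y hy.symm]
end

section
/- Let G be a finite group and let K ⊆ H be two normal subgroups of G. If H is quotient solitary in G and K is quotient solitary in H, then K is quotient solitary in G. -/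
/-- The defining property of a quotient solitary subgroup, in terms of homomorphisms: two
homomorphisms with the same range have the same kernel if one of the kernels is quotient
solitary. -/
theorem IsQuotientSolitary.ker_eq_s4 {G Q : Type*} [Group G] [Group Q] {f g : G →* Q}
    (hg : IsQuotientSolitary g.ker) (hfg : f.range = g.range) : f.ker = g.ker := by
  obtain ⟨_, h⟩ := hg
  exact h f.ker inferInstance
    ⟨(QuotientGroup.quotientKerEquivRange f).trans
      ((MulEquiv.subgroupCongr hfg).trans (QuotientGroup.quotientKerEquivRange g).symm)⟩

/-- "To be quotient solitary" is transitive: if `K ⊆ H` are normal subgroups of a finite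
group `G`, `H` is quotient solitary in `G` and `K` is quotient solitary in `H`, then
`K` is quotient solitary in `G`. -/
theorem isQuotientSolitary_trans {G : Type*} [Group G] [Finite G]
    (H K : Subgroup G) (hH : H.Normal) (hK : K.Normal) (hKH : K ≤ H)
    (h1 : IsQuotientSolitary H) (h2 : IsQuotientSolitary (K.subgroupOf H)) :
    IsQuotientSolitary K := by
  refine ⟨hK, fun L hL ⟨φ⟩ => ?_⟩
  let p : G →* G ⧸ K := QuotientGroup.mk' K
  let f : G →* G ⧸ K := φ.toMonoidHom.comp (QuotientGroup.mk' L)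
  let q : G ⧸ K →* G ⧸ H := QuotientGroup.map K H (MonoidHom.id G) hKH
  have hp : Function.Surjective p := QuotientGroup.mk'_surjective K
  have hf : Function.Surjective f := φ.surjective.comp (QuotientGroup.mk'_surjective L)
  have hpk : p.ker = K := QuotientGroup.ker_mk' K
  have hfk : f.ker = L := by
    ext x
    simp [f]
  -- `f` is made opaque so that `range_comp` and `comap_ker` below do not split it into its factors.
  clear_value f
  have hqp : (q.comp p).ker = H := QuotientGroup.ker_mk' H
  have hqf : (q.comp f).ker = H := by
    rw [← hqp] at h1
    refine (h1.ker_eq_s4 ?_).trans hqp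
    rw [MonoidHom.range_comp, MonoidHom.range_comp, MonoidHom.range_eq_top.2 hf,
      MonoidHom.range_eq_top.2 hp]
  -- Both `f` and `p` map `H` onto `ker q`.
  have hpH : H.map p = q.ker := by
    conv_lhs => rw [← hqp, ← MonoidHom.comap_ker]
    exact Subgroup.map_comap_eq_self_of_surjective hp _
  have hfH : H.map f = q.ker := by
    conv_lhs => rw [← hqf, ← MonoidHom.comap_ker]
    exact Subgroup.map_comap_eq_self_of_surjective hf _
  have hLH : L ≤ H := by
    rw [← hfk, ← hqf, ← MonoidHom.comap_ker]
    exact Subgroup.comap_mono bot_le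
  have hpk' : (p.comp H.subtype).ker = K.subgroupOf H := by
    rw [← MonoidHom.comap_ker, hpk]; rfl
  have hfk' : (f.comp H.subtype).ker = L.subgroupOf H := by
    rw [← MonoidHom.comap_ker, hfk]; rfl
  rw [← hpk'] at h2
  have key : L.subgroupOf H = K.subgroupOf H := by
    rw [← hpk', ← hfk']
    refine h2.ker_eq_s4 ?_
    rw [MonoidHom.range_comp, MonoidHom.range_comp, H.range_subtype, hfH, hpH]
  rwa [Subgroup.subgroupOf_inj, inf_eq_left.2 hLH, inf_eq_left.2 hKH] at key
end

section
/- Let G be a finite group, H a proper normal subgroup of G, and K a normal subgroup of G with H ⊆ K. If K is quotient solitary in G, then the image K/H of K under the canonical projection G → G/H is quotient solitary in G/H. -/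
/-- The image of a quotient solitary subgroup under the canonical projection
`G → G/H` is quotient solitary in `G/H`. -/
theorem isQuotientSolitary_map_mk' {G : Type*} [Group G] [Finite G]
    (H K : Subgroup G) [hH : H.Normal] (hK : K.Normal)
    (hHproper : H ≠ ⊤) (hHK : H ≤ K) (hqs : IsQuotientSolitary K) :
    IsQuotientSolitary (K.map (QuotientGroup.mk' H)) := by
  obtain ⟨_, hsol⟩ := hqs
  refine ⟨inferInstance, fun L hL => ?_⟩
  -- By the correspondence theorem `L = M / H`, where `M` is the preimage of `L` in `G`.
  obtain ⟨M, hM, hHM, rfl⟩ : ∃ M : Subgroup G, M.Normal ∧ H ≤ M ∧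
      M.map (QuotientGroup.mk' H) = L :=
    ⟨L.comap (QuotientGroup.mk' H), inferInstance, QuotientGroup.le_comap_mk' H L,
      Subgroup.map_comap_eq_self_of_surjective (QuotientGroup.mk'_surjective H) L⟩
  rintro ⟨e⟩
  -- The third isomorphism theorem turns `(G/H)/(M/H) ≅ (G/H)/(K/H)` into `G/M ≅ G/K`.
  rw [hsol M hM ⟨(QuotientGroup.quotientQuotientEquivQuotient H M hHM).symm.trans
    (e.trans (QuotientGroup.quotientQuotientEquivQuotient H K hHK))⟩]
end

section
/- Let G be a finite group and H a proper normal subgroup of G that is quotient solitary. If the quotient group G/H is quotient solitary free, then H is maximal among the proper quotient solitary subgroups of G, i.e. there is no quotient solitary normal subgroup K of G with H ⊊ K ⊊ G. -/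
/-- If `H` is a proper quotient solitary normal subgroup of a finite group `G` and
`G/H` is quotient solitary free, then `H` is maximal among the proper quotient
solitary subgroups of `G`. -/
theorem isQuotientSolitary_maximal_of_quotient_free {G : Type*} [Group G] [Finite G]
    (H : Subgroup G) [hH : H.Normal] (hHproper : H ≠ ⊤)
    (hqs : IsQuotientSolitary H)
    (hfree : ∀ K : Subgroup (G ⧸ H), IsQuotientSolitary K → K = ⊥ ∨ K = ⊤) :
    ¬ ∃ K : Subgroup G, IsQuotientSolitary K ∧ H < K ∧ K < ⊤ := by
  rintro ⟨K, ⟨hK, hKsol⟩, hHK, hKtop⟩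
  have hsurj : Function.Surjective (QuotientGroup.mk' H) := QuotientGroup.mk'_surjective H
  have hker : (QuotientGroup.mk' H).ker ≤ K := by
    rw [QuotientGroup.ker_mk']; exact hHK.le
  have hcomap : (K.map (QuotientGroup.mk' H)).comap (QuotientGroup.mk' H) = K :=
    Subgroup.comap_map_eq_self hker
  have hKmap : (K.map (QuotientGroup.mk' H)).Normal := hK.map _ hsurj
  have hsol : IsQuotientSolitary (K.map (QuotientGroup.mk' H)) := by
    refine ⟨hKmap, fun L hL ⟨e⟩ => ?_⟩
    -- Pull `L` back to `G`; by the third isomorphism theorem its quotient is `(G ⧸ H) ⧸ L`.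
    have hHL : H ≤ L.comap (QuotientGroup.mk' H) := by
      simpa only [QuotientGroup.ker_mk'] using Subgroup.ker_le_comap (QuotientGroup.mk' H) L
    have hmap : (L.comap (QuotientGroup.mk' H)).map (QuotientGroup.mk' H) = L :=
      Subgroup.map_comap_eq_self_of_surjective hsurj L
    have hLK : L.comap (QuotientGroup.mk' H) = K :=
      hKsol _ (hL.comap _)
        ⟨(QuotientGroup.quotientQuotientEquivQuotient H _ hHL).symm.trans
          ((QuotientGroup.quotientMulEquivOfEq hmap).trans
            (e.trans (QuotientGroup.quotientQuotientEquivQuotient H K hHK.le)))⟩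
    rw [← hLK, hmap]
  rcases hfree _ hsol with h | h
  · rw [h, MonoidHom.comap_bot, QuotientGroup.ker_mk'] at hcomap
    exact hHK.ne hcomap
  · rw [h, Subgroup.comap_top] at hcomap
    exact hKtop.ne hcomap.symm
end

section
/- Let G be a finite p-group (p a prime). Then the Frattini subgroup Φ(G) is quotient solitary in G, and moreover Φ(G) is maximal among the proper quotient solitary subgroups of G: there is no quotient solitary normal subgroup K of G with Φ(G) ⊊ K ⊊ G. -/
lemma mem_frattini_iff {G : Type*} [Group G] {g : G} :
    g ∈ frattini G ↔ ∀ M : Subgroup G, IsCoatom M → g ∈ M := by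
  simp [frattini, Order.radical, Subgroup.mem_iInf]

lemma frattini_quotient_frattini (G : Type*) [Group G] :
    frattini (G ⧸ frattini G) = ⊥ := by
  rw [eq_bot_iff]
  intro x hx
  obtain ⟨g, rfl⟩ := QuotientGroup.mk'_surjective _ x
  rw [Subgroup.mem_bot, QuotientGroup.mk'_apply, QuotientGroup.eq_one_iff, mem_frattini_iff]
  intro M hM
  have hcm : (M.map (QuotientGroup.mk' (frattini G))).comap (QuotientGroup.mk' (frattini G))
      = M := by
    apply Subgroup.comap_map_eq_self
    rw [QuotientGroup.ker_mk']
    exact frattini_le_coatom hM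
  have hco : IsCoatom (M.map (QuotientGroup.mk' (frattini G))) := by
    refine ⟨fun h => hM.1 ?_, fun L hL => ?_⟩
    · rw [← hcm, h, Subgroup.comap_top]
    · have h1 := hM.2 (L.comap (QuotientGroup.mk' (frattini G))) (by
        have := (Subgroup.comap_lt_comap_of_surjective
          (QuotientGroup.mk'_surjective (frattini G))).2 hL
        rwa [hcm] at this)
      rw [← Subgroup.map_comap_eq_self_of_surjective
        (QuotientGroup.mk'_surjective (frattini G)) L, h1,
        Subgroup.map_top_of_surjective _ (QuotientGroup.mk'_surjective _)]
  have := mem_frattini_iff.1 hx _ hco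
  rwa [← Subgroup.mem_comap, hcm] at this

lemma isQuotientSolitary_frattini (G : Type*) [Group G] [Finite G] :
    IsQuotientSolitary (frattini G) := by
  refine ⟨inferInstance, fun K hK ⟨e⟩ => ?_⟩
  have hbot : frattini (G ⧸ K) = ⊥ := by
    have h := frattini_le_comap_frattini_of_surjective (φ := e.toMonoidHom) e.surjective
    rw [frattini_quotient_frattini] at h
    rw [eq_bot_iff]
    intro x hx
    have := h hx
    simpa using this
  have hle : frattini G ≤ K := by
    have h := frattini_le_comap_frattini_of_surjective (QuotientGroup.mk'_surjective K)
    rwa [hbot, MonoidHom.comap_bot, QuotientGroup.ker_mk'] at h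
  have hidx : K.index = (frattini G).index := Nat.card_congr e.toEquiv
  refine (Subgroup.eq_of_le_of_card_ge hle ?_).symm
  have h1 := K.card_mul_index
  rw [hidx, ← (frattini G).card_mul_index] at h1
  exact (Nat.eq_of_mul_eq_mul_right (Nat.pos_of_ne_zero Subgroup.index_ne_zero_of_finite) h1).le

lemma IsPGroup.card_quotient_of_isCoatom {G : Type*} [Group G] [Finite G] {p : ℕ}
    [hp : Fact p.Prime] (hG : IsPGroup p G) {M : Subgroup G} [M.Normal] (hM : IsCoatom M) :
    Nat.card (G ⧸ M) = p := by
  have hnt : Nontrivial (G ⧸ M) := QuotientGroup.nontrivial_iff.2 hM.1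
  obtain ⟨n, hn0, hn⟩ := (hG.to_quotient M).nontrivial_iff_card.1 hnt
  obtain ⟨q, hq⟩ := exists_prime_orderOf_dvd_card' (G := G ⧸ M) p
    (hn ▸ dvd_pow_self p hn0.ne')
  have hsurj := QuotientGroup.mk'_surjective M
  have hlt : M < (Subgroup.zpowers q).comap (QuotientGroup.mk' M) := by
    have h : (⊥ : Subgroup (G ⧸ M)) < Subgroup.zpowers q := by
      rw [bot_lt_iff_ne_bot, Ne, Subgroup.zpowers_eq_bot, ← orderOf_eq_one_iff, hq]
      exact hp.out.ne_one
    have := (Subgroup.comap_lt_comap_of_surjective hsurj).2 h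
    rwa [MonoidHom.comap_bot, QuotientGroup.ker_mk'] at this
  have htop : Subgroup.zpowers q = ⊤ := by
    rw [← Subgroup.map_comap_eq_self_of_surjective hsurj (Subgroup.zpowers q), hM.2 _ hlt,
      Subgroup.map_top_of_surjective _ hsurj]
  rw [← Subgroup.card_top, ← htop, Nat.card_zpowers, hq]

lemma IsPGroup.normal_of_isCoatom {G : Type*} [Group G] [Finite G] {p : ℕ}
    [Fact p.Prime] (hG : IsPGroup p G) {M : Subgroup G} (hM : IsCoatom M) : M.Normal := by
  have := hG.isNilpotent
  exact Subgroup.NormalizerCondition.normal_of_coatom M Group.normalizerCondition_of_isNilpotent hM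

lemma IsPGroup.pow_mem_frattini {G : Type*} [Group G] [Finite G] {p : ℕ}
    [Fact p.Prime] (hG : IsPGroup p G) (g : G) : g ^ p ∈ frattini G := by
  refine mem_frattini_iff.2 fun M hM => ?_
  have := hG.normal_of_isCoatom hM
  rw [← QuotientGroup.eq_one_iff, QuotientGroup.mk_pow]
  exact orderOf_dvd_iff_pow_eq_one.1 (hG.card_quotient_of_isCoatom hM ▸ orderOf_dvd_natCard _)

lemma IsPGroup.commutator_mem_frattini {G : Type*} [Group G] [Finite G] {p : ℕ}
    [Fact p.Prime] (hG : IsPGroup p G) (a b : G) : (a * b)⁻¹ * (b * a) ∈ frattini G := by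
  refine mem_frattini_iff.2 fun M hM => ?_
  have := hG.normal_of_isCoatom hM
  have := isCyclic_of_prime_card (hG.card_quotient_of_isCoatom hM)
  rw [← QuotientGroup.eq, QuotientGroup.mk_mul, QuotientGroup.mk_mul]
  exact (IsCyclic.commGroup (α := G ⧸ M)).mul_comm _ _

/-- A hom to `G ⧸ K` that is trivial on `M` and takes any prescribed value at `w ∉ M`. -/
lemma IsPGroup.exists_hom_of_isCoatom {G : Type*} [Group G] [Finite G] {p : ℕ}
    [Fact p.Prime] (hG : IsPGroup p G) {M K : Subgroup G} [K.Normal] (hM : IsCoatom M)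
    (hK : frattini G ≤ K) {w : G} (hw : w ∉ M) (v : G) :
    ∃ s : G →* G ⧸ K, (∀ m ∈ M, s m = 1) ∧ s w = v := by
  have := hG.normal_of_isCoatom hM
  have hcard := hG.card_quotient_of_isCoatom hM
  have hw1 : (w : G ⧸ M) ≠ 1 := fun h => hw ((QuotientGroup.eq_one_iff w).1 h)
  have hgen : ∀ x : G ⧸ M, x ∈ Subgroup.zpowers (w : G ⧸ M) :=
    fun x => mem_zpowers_of_prime_card hcard hw1
  have hord : orderOf (v : G ⧸ K) ∣ orderOf (w : G ⧸ M) := by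
    rw [orderOf_eq_card_of_forall_mem_zpowers hgen, hcard, orderOf_dvd_iff_pow_eq_one,
      ← QuotientGroup.mk_pow, QuotientGroup.eq_one_iff]
    exact hK (hG.pow_mem_frattini v)
  refine ⟨(monoidHomOfForallMemZpowers hgen hord).comp (QuotientGroup.mk' M),
    fun m hm => ?_, ?_⟩
  · rw [MonoidHom.comp_apply, QuotientGroup.mk'_apply, (QuotientGroup.eq_one_iff m).2 hm, map_one]
  · exact monoidHomOfForallMemZpowers_apply_gen hgen hord

/-- In a finite p-group the Frattini subgroup is quotient solitary and is maximal among
the proper quotient solitary subgroups. -/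
theorem frattini_isQuotientSolitary_maximal {G : Type*} [Group G] [Finite G]
    (p : ℕ) (hp : p.Prime) (hG : IsPGroup p G) :
    IsQuotientSolitary (frattini G) ∧
      ¬ ∃ K : Subgroup G, IsQuotientSolitary K ∧ frattini G < K ∧ K < ⊤ := by
  refine ⟨isQuotientSolitary_frattini G, ?_⟩
  rintro ⟨K, ⟨hKn, hK⟩, hlt, htop⟩
  have : Fact p.Prime := ⟨hp⟩
  obtain ⟨w, hwK, hwF⟩ := SetLike.exists_of_lt hlt
  obtain ⟨v, -, hvK⟩ := SetLike.exists_of_lt htop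
  rw [mem_frattini_iff] at hwF
  push Not at hwF
  obtain ⟨M, hM, hwM⟩ := hwF
  obtain ⟨s, hsM, hsw⟩ := hG.exists_hom_of_isCoatom hM hlt.le hwM v
  let _ : CommGroup (G ⧸ K) :=
    { (inferInstance : Group (G ⧸ K)) with
      mul_comm := by
        rintro ⟨a⟩ ⟨b⟩
        exact QuotientGroup.eq.2 (hlt.le (hG.commutator_mem_frattini a b)) }
  let f : G →* G ⧸ K := QuotientGroup.mk' K * s
  have hf : Function.Surjective f := by
    intro x
    obtain ⟨g, rfl⟩ := QuotientGroup.mk'_surjective K x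
    have hsup : M ⊔ K = ⊤ := hM.2 _ (left_lt_sup.2 fun h => hwM (h hwK))
    obtain ⟨m, hm, k, hk, rfl⟩ :=
      Subgroup.mem_sup_of_normal_right.1 (show g ∈ M ⊔ K from hsup ▸ Subgroup.mem_top g)
    refine ⟨m, ?_⟩
    rw [map_mul, MonoidHom.mul_apply, hsM m hm, QuotientGroup.mk'_apply, QuotientGroup.mk'_apply,
      (QuotientGroup.eq_one_iff k).2 hk]
  have hker := hK f.ker inferInstance ⟨QuotientGroup.quotientKerEquivOfSurjective f hf⟩
  have hw : f w = 1 := by rwa [← MonoidHom.mem_ker, hker]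
  rw [MonoidHom.mul_apply, hsw, QuotientGroup.mk'_apply, (QuotientGroup.eq_one_iff w).2 hwK,
    one_mul, QuotientGroup.eq_one_iff] at hw
  exact hvK hw
end

section
/- Let G₁ and G₂ be finite groups of coprime orders, and let N₁ be a normal subgroup of G₁ and N₂ a normal subgroup of G₂. Then the normal subgroup N₁ × N₂ of G₁ × G₂ is quotient solitary in G₁ × G₂ if and only if N₁ is quotient solitary in G₁ and N₂ is quotient solitary in G₂. -/
theorem MonoidHom.apply_eq_one_of_coprime_card {A B : Type*} [Group A] [Group B]
    (h : Nat.Coprime (Nat.card A) (Nat.card B)) (f : A →* B) (a : A) : f a = 1 :=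
  orderOf_eq_one_iff.mp <| Nat.eq_one_of_dvd_coprimes h
    ((orderOf_map_dvd f a).trans (orderOf_dvd_natCard a)) (orderOf_dvd_natCard (f a))

theorem MulEquiv.apply_mk_one_of_coprime {A B C D : Type*} [Group A] [Group B] [Group C] [Group D]
    (h : Nat.Coprime (Nat.card A) (Nat.card D)) (e : A × B ≃* C × D) (a : A) :
    e (a, 1) = ((e (a, 1)).1, 1) :=
  Prod.ext rfl <| MonoidHom.apply_eq_one_of_coprime_card h
    ((MonoidHom.snd C D).comp (e.toMonoidHom.comp (MonoidHom.inl A B))) a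

/-- An isomorphism `A × B ≃* C × D` restricts to an isomorphism of the first factors when
`|A|` is coprime to `|D|` and `|C|` is coprime to `|B|`. -/
theorem MulEquiv.nonempty_fst_of_coprime {A B C D : Type*} [Group A] [Group B] [Group C] [Group D]
    (hAD : Nat.Coprime (Nat.card A) (Nat.card D)) (hCB : Nat.Coprime (Nat.card C) (Nat.card B))
    (e : A × B ≃* C × D) : Nonempty (A ≃* C) :=
  ⟨{ toFun := fun a => (e (a, 1)).1
     invFun := fun c => (e.symm (c, 1)).1
     left_inv := fun a => by
       beta_reduce
       rw [← e.apply_mk_one_of_coprime hAD a, e.symm_apply_apply]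
     right_inv := fun c => by
       beta_reduce
       rw [← e.symm.apply_mk_one_of_coprime hCB c, e.apply_symm_apply]
     map_mul' := fun a b => by
       rw [← Prod.fst_mul, ← map_mul, Prod.mk_mul_mk, one_mul] }⟩

theorem Subgroup.mk_one_mem_of_coprime_card {G₁ G₂ : Type*} [Group G₁] [Group G₂]
    (hco : Nat.Coprime (Nat.card G₁) (Nat.card G₂)) (K : Subgroup (G₁ × G₂))
    {a : G₁} {b : G₂} (h : (a, b) ∈ K) : (a, 1) ∈ K := by
  obtain ⟨k, hk₁, hk₂⟩ := Nat.chineseRemainder hco 1 0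
  have ha : a ^ k = a := by
    simpa using pow_eq_pow_iff_modEq.mpr (hk₁.of_dvd (_root_.orderOf_dvd_natCard a))
  have hb : b ^ k = 1 := by
    simpa using pow_eq_pow_iff_modEq.mpr (hk₂.of_dvd (_root_.orderOf_dvd_natCard b))
  simpa [ha, hb] using K.pow_mem h k

/-- Every subgroup of a product of two groups of coprime orders is the product of its
intersections with the two factors. -/
theorem Subgroup.eq_prod_comap_of_coprime_card {G₁ G₂ : Type*} [Group G₁] [Group G₂]
    (hco : Nat.Coprime (Nat.card G₁) (Nat.card G₂)) (K : Subgroup (G₁ × G₂)) :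
    K = (K.comap (MonoidHom.inl G₁ G₂)).prod (K.comap (MonoidHom.inr G₁ G₂)) := by
  ext ⟨a, b⟩
  simp only [Subgroup.mem_prod, Subgroup.mem_comap, MonoidHom.inl_apply, MonoidHom.inr_apply]
  refine ⟨fun h => ?_, fun ⟨ha, hb⟩ => by simpa using K.mul_mem ha hb⟩
  have ha := K.mk_one_mem_of_coprime_card hco h
  exact ⟨ha, by simpa using K.mul_mem (K.inv_mem ha) h⟩

theorem Subgroup.prod_left_injective {G₁ G₂ : Type*} [Group G₁] [Group G₂]
    (L : Subgroup G₂) : Function.Injective fun H : Subgroup G₁ => H.prod L := fun H K h => by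
  ext a
  simpa [Subgroup.mem_prod, L.one_mem] using SetLike.ext_iff.mp h (a, 1)

theorem Subgroup.prod_right_injective {G₁ G₂ : Type*} [Group G₁] [Group G₂]
    (L : Subgroup G₁) : Function.Injective fun H : Subgroup G₂ => L.prod H := fun H K h => by
  ext b
  simpa [Subgroup.mem_prod, L.one_mem] using SetLike.ext_iff.mp h (1, b)

/-- For finite groups of coprime orders, `N₁ × N₂` is quotient solitary in `G₁ × G₂`
iff `N₁` is quotient solitary in `G₁` and `N₂` is quotient solitary in `G₂`. -/
theorem isQuotientSolitary_prod_iff {G₁ G₂ : Type*} [Group G₁] [Group G₂]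
    [Finite G₁] [Finite G₂] (hco : Nat.Coprime (Nat.card G₁) (Nat.card G₂))
    (N₁ : Subgroup G₁) (N₂ : Subgroup G₂) (h₁ : N₁.Normal) (h₂ : N₂.Normal) :
    IsQuotientSolitary (N₁.prod N₂) ↔
      IsQuotientSolitary N₁ ∧ IsQuotientSolitary N₂ := by
  constructor
  · rintro ⟨_, h⟩
    refine ⟨⟨h₁, fun K hK ⟨e⟩ => ?_⟩, ⟨h₂, fun K hK ⟨e⟩ => ?_⟩⟩
    · exact Subgroup.prod_left_injective N₂ <| h (K.prod N₂) inferInstance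
        ⟨(QuotientGroup.prodMulEquiv K N₂).trans <|
          (e.prodCongr (MulEquiv.refl _)).trans (QuotientGroup.prodMulEquiv N₁ N₂).symm⟩
    · exact Subgroup.prod_right_injective N₁ <| h (N₁.prod K) inferInstance
        ⟨(QuotientGroup.prodMulEquiv N₁ K).trans <|
          ((MulEquiv.refl _).prodCongr e).trans (QuotientGroup.prodMulEquiv N₁ N₂).symm⟩
  · rintro ⟨⟨_, H₁⟩, ⟨_, H₂⟩⟩
    refine ⟨inferInstance, fun K hK ⟨e⟩ => ?_⟩
    have hK₁ : (K.comap (MonoidHom.inl G₁ G₂)).Normal := inferInstance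
    have hK₂ : (K.comap (MonoidHom.inr G₁ G₂)).Normal := inferInstance
    have hKeq := K.eq_prod_comap_of_coprime_card hco
    generalize K.comap (MonoidHom.inl G₁ G₂) = K₁ at *
    generalize K.comap (MonoidHom.inr G₁ G₂) = K₂ at *
    subst hKeq
    let f : (G₁ ⧸ K₁) × (G₂ ⧸ K₂) ≃* (G₁ ⧸ N₁) × (G₂ ⧸ N₂) :=
      (QuotientGroup.prodMulEquiv K₁ K₂).symm.trans (e.trans (QuotientGroup.prodMulEquiv N₁ N₂))
    have hq (L₁ : Subgroup G₁) (L₂ : Subgroup G₂) :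
        Nat.Coprime (Nat.card (G₁ ⧸ L₁)) (Nat.card (G₂ ⧸ L₂)) :=
      (hco.coprime_dvd_left L₁.card_quotient_dvd_card).coprime_dvd_right L₂.card_quotient_dvd_card
    rw [H₁ K₁ hK₁ (MulEquiv.nonempty_fst_of_coprime (hq _ _) (hq _ _) f),
      H₂ K₂ hK₂ (MulEquiv.nonempty_fst_of_coprime (hq _ _).symm (hq _ _).symm
        (MulEquiv.prodComm.trans (f.trans MulEquiv.prodComm)))]
end

section
/- Let G be a finite nilpotent group and define the Frattini series by Φ₀(G) = G and Φₙ₊₁(G) = the Frattini subgroup of Φₙ(G) (regarded as a subgroup of G). Then for every natural number n, the subgroup Φₙ(G) is quotient solitary in G. -/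
/-- The Frattini series of `G`: `Φ₀(G) = G` and `Φₙ₊₁(G)` is the Frattini subgroup of
`Φₙ(G)`, regarded as a subgroup of `G`. -/
def frattiniSeries (G : Type*) [Group G] : ℕ → Subgroup G
  | 0 => ⊤
  | n + 1 => Subgroup.map (frattiniSeries G n).subtype (frattini (frattiniSeries G n))

lemma isCoatomistic_of_sInf_coatoms_eq_bot {L : Type*} [CompleteLattice L] [IsModularLattice L]
    [Finite L] (h : sInf {a : L | IsCoatom a} = ⊥) : IsCoatomistic L := by
  have : IsCompactlyGenerated Lᵒᵈ := CompleteLattice.isCompactlyGenerated_of_wellFoundedGT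
  have htop : sSup {a : Lᵒᵈ | IsAtom a} = ⊤ := by
    rw [← OrderDual.toDual_bot, ← h, toDual_sInf]
    congr 1
  have : ComplementedLattice Lᵒᵈ := complementedLattice_of_sSup_atoms_eq_top htop
  exact isAtomistic_dual_iff_isCoatomistic.1 inferInstance

lemma Subgroup.isCoatom_map_of_ker_le {G H : Type*} [Group G] [Group H] {φ : G →* H}
    (hφ : Function.Surjective φ) {M : Subgroup G} (hM : IsCoatom M) (hker : φ.ker ≤ M) :
    IsCoatom (M.map φ) := by
  have hcm : (M.map φ).comap φ = M := Subgroup.comap_map_eq_self hker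
  refine ⟨fun h => hM.1 ?_, fun K hK => ?_⟩
  · rw [← hcm, h, Subgroup.comap_top]
  · have hlt : M < K.comap φ := by
      rw [← hcm]
      exact (Subgroup.comap_lt_comap_of_surjective hφ).2 hK
    rw [← Subgroup.map_comap_eq_self_of_surjective hφ K, hM.2 _ hlt,
      Subgroup.map_top_of_surjective φ hφ]

/-- `φ` sends into the Frattini subgroup only elements of the intersection of the maximal
subgroups containing `ker φ`. -/
lemma mem_coatom_of_map_mem_frattini {G H : Type*} [Group G] [Group H] {φ : G →* H}
    (hφ : Function.Surjective φ) {g : G} (hg : φ g ∈ frattini H) {M : Subgroup G}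
    (hM : IsCoatom M) (hker : φ.ker ≤ M) : g ∈ M := by
  rw [← Subgroup.comap_map_eq_self hker]
  exact frattini_le_coatom (Subgroup.isCoatom_map_of_ker_le hφ hM hker) hg

/-- Among finite abelian groups, having trivial Frattini subgroup passes to quotients: the kernel
is an intersection of maximal subgroups. -/
lemma frattini_eq_bot_of_surjective {C D : Type*} [CommGroup C] [Finite C] [Group D] {ψ : C →* D}
    (hψ : Function.Surjective ψ) (hC : frattini C = ⊥) : frattini D = ⊥ := by
  have : IsCoatomistic (Subgroup C) := by
    apply isCoatomistic_of_sInf_coatoms_eq_bot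
    rw [← hC, frattini, Order.radical, sInf_eq_iInf]
  rw [eq_bot_iff]
  intro x hx
  obtain ⟨c, rfl⟩ := hψ x
  obtain ⟨s, hs, hsM⟩ := eq_sInf_coatoms ψ.ker
  have hc : c ∈ ψ.ker := by
    rw [hs, Subgroup.mem_sInf]
    intro M hM
    exact mem_coatom_of_map_mem_frattini hψ hx (hsM M hM) (hs ▸ sInf_le hM)
  exact hc

lemma commutator_le_frattini (G : Type*) [Group G] [Group.IsNilpotent G] :
    commutator G ≤ frattini G := by
  refine le_iInf₂ fun M hM => ?_
  have hn : M.Normal := Subgroup.NormalizerCondition.normal_of_coatom M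
    Group.normalizerCondition_of_isNilpotent hM
  obtain ⟨x, hx⟩ : ∃ x, x ∉ M := by
    by_contra! h
    exact hM.1 ((Subgroup.eq_top_iff' M).2 h)
  -- `G = M⟨x⟩` for any `x ∉ M`, so `G / M` is cyclic.
  refine hn.commutator_le_of_self_sup_commutative_eq_top (H := Subgroup.zpowers x) ?_ inferInstance
  refine hM.2 _ (lt_of_le_of_ne le_sup_left fun h => hx ?_)
  rw [h]
  exact Subgroup.mem_sup_right (Subgroup.mem_zpowers x)

/-- The key point: `H / φ(Φ(G))` is a quotient of the abelian group `G / Φ(G)`, so its Frattini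
subgroup is trivial.  Nilpotency is needed only for the inclusion `Φ(H) ≤ φ(Φ(G))`. -/
lemma map_frattini_of_surjective {G H : Type*} [Group G] [Finite G] [Group.IsNilpotent G]
    [Group H] {φ : G →* H} (hφ : Function.Surjective φ) :
    (frattini G).map φ = frattini H := by
  apply le_antisymm
  · exact Subgroup.map_le_iff_le_comap.2 (frattini_le_comap_frattini_of_surjective hφ)
  have hN : ((frattini G).map φ).Normal := Subgroup.Normal.map inferInstance φ hφ
  have hcomm := Subgroup.Normal.quotient_commutative_iff_commutator_le.2 (commutator_le_frattini G)
  let _ : CommGroup (G ⧸ frattini G) :=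
    { (inferInstance : Group (G ⧸ frattini G)) with mul_comm := hcomm.is_comm.comm }
  let ψ : G ⧸ frattini G →* H ⧸ (frattini G).map φ :=
    QuotientGroup.map _ _ φ (Subgroup.le_comap_map φ _)
  have hψ : Function.Surjective ψ := by
    intro y
    obtain ⟨h, rfl⟩ := QuotientGroup.mk'_surjective _ y
    obtain ⟨g, rfl⟩ := hφ h
    exact ⟨QuotientGroup.mk g, rfl⟩
  have hbot : frattini (H ⧸ (frattini G).map φ) = ⊥ :=
    frattini_eq_bot_of_surjective hψ (frattini_quotient_frattini G)
  have hle := frattini_le_comap_frattini_of_surjective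
    (QuotientGroup.mk'_surjective ((frattini G).map φ))
  rwa [hbot, MonoidHom.comap_bot, QuotientGroup.ker_mk'] at hle

lemma map_frattiniSeries_of_surjective {G H : Type*} [Group G] [Finite G] [Group.IsNilpotent G]
    [Group H] {φ : G →* H} (hφ : Function.Surjective φ) (n : ℕ) :
    (frattiniSeries G n).map φ = frattiniSeries H n := by
  induction n with
  | zero => exact Subgroup.map_top_of_surjective φ hφ
  | succ n ih =>
    simp only [frattiniSeries]
    rw [← ih, ← map_frattini_of_surjective (φ.subgroupMap_surjective (frattiniSeries G n)),
      Subgroup.map_map, Subgroup.map_map]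
    rfl

instance frattiniSeries_normal (G : Type*) [Group G] (n : ℕ) : (frattiniSeries G n).Normal := by
  induction n with
  | zero => exact Subgroup.normal_of_characteristic (⊤ : Subgroup G)
  | succ n ih =>
    simp only [frattiniSeries]
    infer_instance

/-- Every term of the Frattini series of a finite nilpotent group is quotient solitary. -/
theorem frattiniSeries_isQuotientSolitary {G : Type*} [Group G] [Finite G]
    [Group.IsNilpotent G] (n : ℕ) :
    IsQuotientSolitary (frattiniSeries G n) := by
  refine ⟨frattiniSeries_normal G n, fun K hK hiso => ?_⟩
  obtain ⟨e⟩ := hiso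
  have h₁ : frattiniSeries (G ⧸ frattiniSeries G n) n = ⊥ := by
    rw [← map_frattiniSeries_of_surjective (QuotientGroup.mk'_surjective (frattiniSeries G n)) n,
      QuotientGroup.map_mk'_self]
  have h₂ : frattiniSeries (G ⧸ K) n = ⊥ := by
    rw [← map_frattiniSeries_of_surjective (φ := e.symm.toMonoidHom) e.symm.surjective n, h₁,
      Subgroup.map_bot]
  have hle : frattiniSeries G n ≤ K := by
    rw [← QuotientGroup.ker_mk' K, ← Subgroup.map_eq_bot_iff,
      map_frattiniSeries_of_surjective (QuotientGroup.mk'_surjective K) n, h₂]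
  refine (Subgroup.eq_of_le_of_card_ge hle ?_).symm
  have hc := Nat.card_congr e.toEquiv
  have hK' := Subgroup.card_eq_card_quotient_mul_card_subgroup K
  have hF := Subgroup.card_eq_card_quotient_mul_card_subgroup (frattiniSeries G n)
  rw [hK', hc] at hF
  exact (Nat.eq_of_mul_eq_mul_left Nat.card_pos hF).le
end

section
/- Let G be a finite nilpotent group. Then every normal subgroup of G is quotient solitary if and only if G is cyclic. -/
/-- Each of the two subgroups is the set of solutions of `x ^ n = 1`, where `n` is their common
order, because this equation has at most `n` solutions in a cyclic group. -/
lemma Subgroup.eq_of_card_eq_of_isCyclic {G : Type*} [Group G] [Finite G] [IsCyclic G]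
    {H K : Subgroup G} (h : Nat.card K = Nat.card H) : K = H := by
  classical
  have := Fintype.ofFinite G
  have key : ∀ L : Subgroup G, Nat.card L = Nat.card H →
      (L : Set G) = {x : G | x ^ Nat.card H = 1} := by
    intro L hL
    refine Set.eq_of_subset_of_ncard_le (fun x hx => ?_) ?_ (Set.toFinite _)
    · have := pow_card_eq_one' (x := (⟨x, hx⟩ : L))
      rw [hL] at this
      simpa using congrArg Subtype.val this
    · have h1 := IsCyclic.card_pow_eq_one_le (α := G) (n := Nat.card H) Nat.card_pos
      have h2 : (L : Set G).ncard = Nat.card H := hL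
      rw [h2, Set.ncard_eq_toFinset_card']
      simpa using h1
  exact SetLike.coe_injective ((key K h).trans (key H rfl).symm)

/-- The quotient by a maximal normal subgroup is simple and nilpotent, hence of prime order. -/
lemma IsCoatom.prime_index_of_isNilpotent {G : Type*} [Group G] [Finite G]
    [Group.IsNilpotent G] {M : Subgroup G} [M.Normal] (hM : IsCoatom M) : M.index.Prime := by
  have : Nontrivial (G ⧸ M) := QuotientGroup.nontrivial_iff.2 hM.1
  have : IsSimpleGroup (G ⧸ M) := ⟨fun N _ => by
    have hle : M ≤ N.comap (QuotientGroup.mk' M) := by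
      simpa using (QuotientGroup.mk' M).ker_le_comap N
    have hinj := Subgroup.comap_injective (QuotientGroup.mk'_surjective M)
    rcases hM.le_iff.1 hle with h | h
    · exact Or.inr (hinj (by simpa using h))
    · refine Or.inl (hinj ?_)
      rw [h, MonoidHom.comap_bot, QuotientGroup.ker_mk']⟩
  exact Group.is_simple_iff_prime_card.1 this

/-- Finitely many proper normal subgroups with pairwise coprime indices do not cover the group.
In the induction step, an element `x` that avoids the previous subgroups but lies in the new one
`M` is multiplied by `y ^ m`, where `y ∉ M` and `m` is the product of the previous indices: this
power lies in all the previous subgroups but, `m` being coprime to the index of `M`, not in `M`. -/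
lemma exists_notMem_of_coprime_index {G : Type*} [Group G] (s : Finset (Subgroup G))
    (hn : ∀ M ∈ s, M.Normal) (ht : ∀ M ∈ s, M ≠ ⊤)
    (hc : ∀ M ∈ s, ∀ N ∈ s, M ≠ N → Nat.Coprime M.index N.index) :
    ∃ x : G, ∀ M ∈ s, x ∉ M := by
  classical
  induction s using Finset.induction_on with
  | empty => exact ⟨1, by simp⟩
  | insert M s hMs ih =>
    simp only [Finset.mem_insert, forall_eq_or_imp] at hn ht hc
    obtain ⟨x, hx⟩ := ih hn.2 ht.2 fun A hA => (hc.2 A hA).2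
    by_cases hxM : x ∈ M
    · obtain ⟨y, hy⟩ : ∃ y, y ∉ M := by
        by_contra! h
        exact ht.1 ((Subgroup.eq_top_iff' M).2 h)
      have := hn.1
      set m := ∏ N ∈ s, N.index with hm
      have hcop : Nat.Coprime m M.index :=
        Nat.Coprime.prod_left fun N hN => (hc.2 N hN).1 (by rintro rfl; exact hMs hN)
      have hyM : y ^ m ∉ M := by
        intro h
        apply hy
        have h1 := (QuotientGroup.eq_one_iff (N := M) (y ^ m)).2 h
        have h2 := (QuotientGroup.eq_one_iff (N := M) (y ^ M.index)).2 (M.pow_index_mem y)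
        rw [QuotientGroup.mk_pow] at h1 h2
        have h3 := pow_gcd_eq_one.2 ⟨h1, h2⟩
        rw [hcop.gcd_eq_one, pow_one] at h3
        exact (QuotientGroup.eq_one_iff y).1 h3
      refine ⟨x * y ^ m, ?_⟩
      simp only [Finset.mem_insert, forall_eq_or_imp]
      refine ⟨fun h => hyM ((M.mul_mem_cancel_left hxM).1 h), fun N hN h => hx N hN ?_⟩
      have := hn.2 N hN
      obtain ⟨k, hk⟩ := Finset.dvd_prod_of_mem (fun N : Subgroup G => N.index) hN
      have hyN : y ^ m ∈ N := by
        rw [hm, hk, pow_mul]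
        exact N.pow_mem (N.pow_index_mem y) k
      exact (N.mul_mem_cancel_right hyN).1 h
    · exact ⟨x, by simpa using ⟨hxM, hx⟩⟩

/-- A finite nilpotent group has all its normal subgroups quotient solitary iff it is
cyclic. -/
theorem forall_isQuotientSolitary_iff_isCyclic {G : Type*} [Group G] [Finite G]
    [Group.IsNilpotent G] :
    (∀ H : Subgroup G, H.Normal → IsQuotientSolitary H) ↔ IsCyclic G := by
  constructor
  · intro hsol
    have hnormal : ∀ M : Subgroup G, IsCoatom M → M.Normal := fun M hM =>
      Subgroup.NormalizerCondition.normal_of_coatom M Group.normalizerCondition_of_isNilpotent hM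
    have hprime : ∀ M : Subgroup G, IsCoatom M → M.index.Prime := fun M hM =>
      have := hnormal M hM
      hM.prime_index_of_isNilpotent
    obtain ⟨x, hx⟩ := exists_notMem_of_coprime_index
      (Set.toFinite {M : Subgroup G | IsCoatom M}).toFinset
      (by simpa using hnormal) (by simpa using fun M (hM : IsCoatom M) => hM.1) (by
        simp only [Set.Finite.mem_toFinset, Set.mem_ofPred_eq]
        intro M hM N hN hne
        rw [Nat.coprime_primes (hprime M hM) (hprime N hN)]
        intro hindex
        have := hnormal M hM
        have := hnormal N hN
        have : Fact N.index.Prime := ⟨hprime N hN⟩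
        obtain ⟨_, h⟩ := hsol N (hnormal N hN)
        exact hne (h M (hnormal M hM) ⟨mulEquivOfPrimeCardEq (p := N.index) hindex rfl⟩))
    simp only [Set.Finite.mem_toFinset, Set.mem_ofPred_eq] at hx
    rcases eq_top_or_exists_le_coatom (Subgroup.zpowers x) with h | ⟨M, hM, hle⟩
    · exact ⟨x, fun y => Subgroup.mem_zpowers_iff.1 (h.symm ▸ Subgroup.mem_top y)⟩
    · exact absurd (hle (Subgroup.mem_zpowers x)) (hx M hM)
  · rintro hG H hH
    refine ⟨hH, fun K hK ⟨e⟩ => Subgroup.eq_of_card_eq_of_isCyclic ?_⟩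
    have h : K.index = H.index := Nat.card_congr e.toEquiv
    have h1 := K.card_mul_index
    rw [← H.card_mul_index, h] at h1
    exact Nat.eq_of_mul_eq_mul_right (Nat.pos_of_ne_zero H.index_ne_zero_of_finite) h1
end

section
/- Let G be a finite abelian p-group and let δ be an order-reversing bijection of the subgroup lattice of G onto itself such that for every subgroup H of G one has H ≅ G/δ(H) and δ(H) ≅ G/H. Then for every subgroup H of G, H is quotient solitary in G if and only if δ(H) is solitary in G, and H is solitary in G if and only if δ(H) is quotient solitary in G. -/
/-- A subgroup `H` of a group `G` is *solitary* if no other subgroup of `G` is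
isomorphic to it. -/
def IsSolitary {G : Type*} [Group G] (H : Subgroup G) : Prop :=
  ∀ K : Subgroup G, Nonempty (K ≃* H) → K = H

/-- An autoduality of a finite abelian p-group exchanges quotient solitary subgroups and
solitary subgroups. -/
theorem autoduality_qsol_sol {G : Type*} [CommGroup G] [Finite G]
    (p : ℕ) (hp : p.Prime) (hG : IsPGroup p G)
    (δ : Subgroup G ≃ Subgroup G)
    (hanti : ∀ H K : Subgroup G, H ≤ K ↔ δ K ≤ δ H)
    (hdual₁ : ∀ H : Subgroup G, Nonempty (H ≃* G ⧸ δ H))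
    (hdual₂ : ∀ H : Subgroup G, Nonempty (↥(δ H) ≃* G ⧸ H)) :
    ∀ H : Subgroup G,
      (IsQuotientSolitary H ↔ IsSolitary (δ H)) ∧
      (IsSolitary H ↔ IsQuotientSolitary (δ H)) := by
  intro H
  refine ⟨⟨?_, ?_⟩, ⟨?_, ?_⟩⟩
  · rintro ⟨_, h⟩ K ⟨e⟩
    obtain ⟨L, rfl⟩ := δ.surjective K
    obtain ⟨a⟩ := hdual₂ L
    obtain ⟨b⟩ := hdual₂ H
    rw [h L inferInstance ⟨a.symm.trans (e.trans b)⟩]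
  · refine fun h => ⟨inferInstance, ?_⟩
    rintro K _ ⟨e⟩
    obtain ⟨a⟩ := hdual₂ K
    obtain ⟨b⟩ := hdual₂ H
    exact δ.injective (h (δ K) ⟨a.trans (MulEquiv.trans e b.symm)⟩)
  · refine fun h => ⟨inferInstance, ?_⟩
    rintro K _ ⟨e⟩
    obtain ⟨L, rfl⟩ := δ.surjective K
    obtain ⟨a⟩ := hdual₁ L
    obtain ⟨b⟩ := hdual₁ H
    rw [h L ⟨a.trans (MulEquiv.trans e b.symm)⟩]
  · rintro ⟨_, h⟩ K ⟨e⟩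
    obtain ⟨a⟩ := hdual₁ K
    obtain ⟨b⟩ := hdual₁ H
    exact δ.injective (h (δ K) inferInstance ⟨a.symm.trans (e.trans b)⟩)
end

section
/- Let G be a nontrivial finite abelian p-group with exponent p^e, and define the Frattini series by Φ₀(G) = G and Φₙ₊₁(G) = the Frattini subgroup of Φₙ(G) (regarded as a subgroup of G). Then the set of quotient solitary subgroups of G is exactly {Φₙ(G) : 0 ≤ n ≤ e}, and these form a strictly decreasing chain G = Φ₀(G) ⊋ Φ₁(G) ⊋ ... ⊋ Φₑ(G) = {1}; in particular the quotient solitary subgroups of G form a chain of length e under inclusion. -/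
/-- Homomorphisms from a finite abelian group to a cyclic group whose order is a multiple of the
exponent separate points. -/
lemma exists_hom_cyclic_apply_ne_one {A C : Type*} [CommGroup A] [Finite A] [CommGroup C]
    [IsCyclic C] [Finite C] (h : Monoid.exponent A ∣ Nat.card C) {a : A} (ha : a ≠ 1) :
    ∃ f : A →* C, f a ≠ 1 := by
  obtain ⟨c, hc⟩ := IsCyclic.exists_generator (α := C)
  have hord : orderOf c = Nat.card C := orderOf_eq_card_of_forall_mem_zpowers hc
  have : IsCyclic Cˣ := isCyclic_of_surjective (toUnits (G := C)) (toUnits (G := C)).surjective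
  have hC : HasEnoughRootsOfUnity C (Nat.card C) :=
    ⟨⟨c, hord ▸ IsPrimitiveRoot.orderOf c⟩, inferInstance⟩
  have : NeZero (Nat.card C) := ⟨Nat.card_pos.ne'⟩
  have : HasEnoughRootsOfUnity C (Monoid.exponent A) := HasEnoughRootsOfUnity.of_dvd C h
  obtain ⟨φ, hφ⟩ := CommGroup.exists_apply_ne_one_of_hasEnoughRootsOfUnity A C ha
  exact ⟨(toUnits (G := C)).symm.toMonoidHom.comp φ, by simpa using hφ⟩

/-- A point outside the subgroup of `N`-th powers is detected by a homomorphism to a cyclic group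
of order `N`. -/
lemma exists_hom_cyclic_of_notMem_range_pow {A C : Type*} [CommGroup A] [Finite A] [CommGroup C]
    [IsCyclic C] [Finite C] {a : A} (ha : a ∉ (powMonoidHom (Nat.card C) : A →* A).range) :
    ∃ f : A →* C, f a ≠ 1 := by
  set P := (powMonoidHom (Nat.card C) : A →* A).range
  have hexp : Monoid.exponent (A ⧸ P) ∣ Nat.card C := by
    refine Monoid.exponent_dvd_of_forall_pow_eq_one fun y ↦ ?_
    obtain ⟨y, rfl⟩ := QuotientGroup.mk_surjective y
    rw [← QuotientGroup.mk_pow, QuotientGroup.eq_one_iff]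
    exact ⟨y, rfl⟩
  obtain ⟨f, hf⟩ := exists_hom_cyclic_apply_ne_one (C := C) hexp (a := (a : A ⧸ P))
    (by rwa [Ne, QuotientGroup.eq_one_iff])
  exact ⟨f.comp (QuotientGroup.mk' P), hf⟩

lemma frattini_eq_range_pow {A : Type*} [CommGroup A] [Finite A] {p : ℕ} (hp : p.Prime)
    (hA : IsPGroup p A) : frattini A = (powMonoidHom p : A →* A).range := by
  apply le_antisymm
  · intro x hx
    by_contra hxp
    have : Fact p.Prime := ⟨hp⟩
    have hcard : Nat.card (Multiplicative (ZMod p)) = p := Nat.card_zmod p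
    have : IsSimpleGroup (Multiplicative (ZMod p)) :=
      CommGroup.is_simple_iff_prime_card.2 (by rwa [hcard])
    obtain ⟨f, hf⟩ := exists_hom_cyclic_of_notMem_range_pow (C := Multiplicative (ZMod p))
      (a := x) (by rwa [hcard])
    have hsurj : Function.Surjective f := by
      rw [← MonoidHom.range_eq_top]
      refine (eq_bot_or_eq_top f.range).resolve_left fun h ↦ hf ?_
      rw [← Subgroup.mem_bot, ← h]
      exact ⟨x, rfl⟩
    have hker := frattini_le_coatom (Subgroup.isCoatom_comap_of_surjective hsurj isCoatom_bot) hx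
    exact hf (by simpa using hker)
  · have : Fact p.Prime := ⟨hp⟩
    rintro _ ⟨x, rfl⟩
    simp only [frattini, Order.radical, Subgroup.mem_iInf]
    intro M hM
    by_contra hx
    have htop : M ⊔ Subgroup.zpowers (powMonoidHom p x) = ⊤ := by
      refine hM.2 _ (lt_of_le_of_ne le_sup_left fun h ↦ hx ?_)
      rw [h]
      exact Subgroup.mem_sup_right (Subgroup.mem_zpowers _)
    have hxm : x ∈ M ⊔ Subgroup.zpowers (powMonoidHom p x) := htop ▸ Subgroup.mem_top x
    obtain ⟨m, hm, _, ⟨k, rfl⟩, hmk⟩ := Subgroup.mem_sup.1 hxm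
    -- In `A ⧸ M` the class `y` of `x` satisfies `y = y ^ (p * k)`, while its order is a power
    -- of `p`; so `y = 1`.
    have hy : (x : A ⧸ M) ^ ((p : ℤ) * k - 1) = 1 := by
      have h := congrArg (QuotientGroup.mk' M) hmk
      have hm1 : QuotientGroup.mk' M m = 1 := (QuotientGroup.eq_one_iff m).2 hm
      simp only [map_mul, hm1, one_mul, powMonoidHom_apply, map_zpow, map_pow] at h
      rw [zpow_sub, zpow_mul, zpow_natCast, zpow_one, mul_inv_eq_one]
      exact h
    obtain ⟨j, hj⟩ := (IsPGroup.iff_orderOf.1 (hA.to_quotient M)) (x : A ⧸ M)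
    have hdvd := orderOf_dvd_iff_zpow_eq_one.2 hy
    have hone : (x : A ⧸ M) = 1 := by
      rcases Nat.eq_zero_or_pos j with rfl | hj0
      · rwa [pow_zero, orderOf_eq_one_iff] at hj
      · exfalso
        have h1 : (p : ℤ) ∣ p * k - 1 :=
          (Int.natCast_dvd_natCast.2 (hj ▸ dvd_pow_self p hj0.ne')).trans hdvd
        have h2 : (p : ℤ) ∣ 1 := (dvd_sub_right (dvd_mul_right _ _)).1 h1
        exact hp.one_lt.ne' (Nat.dvd_one.1 (by exact_mod_cast h2))
    exact hx (pow_mem ((QuotientGroup.eq_one_iff x).1 hone) p)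

lemma frattiniSeries_eq_range_pow {G : Type*} [CommGroup G] [Finite G] {p : ℕ} (hp : p.Prime)
    (hG : IsPGroup p G) (n : ℕ) :
    frattiniSeries G n = (powMonoidHom (p ^ n) : G →* G).range := by
  induction n with
  | zero => ext x; simp [frattiniSeries]
  | succ n ih =>
    rw [frattiniSeries, frattini_eq_range_pow hp (hG.to_subgroup _)]
    ext x
    constructor
    · rintro ⟨_, ⟨⟨y, hy⟩, rfl⟩, rfl⟩
      rw [ih] at hy
      obtain ⟨z, rfl⟩ := hy
      exact ⟨z, by simp [pow_succ, pow_mul]⟩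
    · rintro ⟨z, rfl⟩
      have hz : z ^ p ^ n ∈ frattiniSeries G n := ih ▸ ⟨z, rfl⟩
      exact ⟨_, ⟨⟨_, hz⟩, rfl⟩, by simp [pow_succ, pow_mul]⟩

lemma isQuotientSolitary_range_pow {G : Type*} [CommGroup G] [Finite G] (N : ℕ) :
    IsQuotientSolitary (powMonoidHom N : G →* G).range := by
  refine ⟨inferInstance, fun K hK ⟨e⟩ ↦ ?_⟩
  symm
  have hle : (powMonoidHom N : G →* G).range ≤ K := by
    rintro _ ⟨x, rfl⟩
    rw [← QuotientGroup.eq_one_iff, powMonoidHom_apply, QuotientGroup.mk_pow]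
    apply e.injective
    rw [map_pow, map_one]
    obtain ⟨y, hy⟩ := QuotientGroup.mk_surjective (e (x : G ⧸ K))
    rw [← hy, ← QuotientGroup.mk_pow, QuotientGroup.eq_one_iff]
    exact ⟨y, rfl⟩
  have hidx : K.index = (powMonoidHom N : G →* G).range.index := Nat.card_congr e.toEquiv
  refine Subgroup.eq_of_le_of_card_ge hle ?_
  have h1 := K.card_mul_index
  rw [← (powMonoidHom N : G →* G).range.card_mul_index, hidx] at h1
  exact (Nat.eq_of_mul_eq_mul_right (Nat.pos_of_ne_zero Subgroup.index_ne_zero_of_finite) h1).le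

/-- In a finite abelian `p`-group, an element `q` of maximal order has a homomorphism to `⟨q⟩`
mapping it to a generator: such a homomorphism is one not killing `q ^ (p ^ (n - 1))`, where
`p ^ n` is the order of `q`. -/
lemma exists_hom_zpowers_generator {Q : Type*} [CommGroup Q] [Finite Q] {p n : ℕ} (hp : p.Prime)
    (hexp : Monoid.exponent Q = p ^ n) {q : Q} (hq : orderOf q = p ^ n) :
    ∃ r : Q →* Subgroup.zpowers q, ∀ c, c ∈ Subgroup.zpowers (r q) := by
  have hcard : Nat.card (Subgroup.zpowers q) = p ^ n := by rw [Nat.card_zpowers, hq]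
  suffices ∃ r : Q →* Subgroup.zpowers q, orderOf (r q) = p ^ n by
    obtain ⟨r, hr⟩ := this
    refine ⟨r, fun c ↦ ?_⟩
    have h := Subgroup.eq_top_of_card_eq (Subgroup.zpowers (r q))
      (by rw [Nat.card_zpowers, hr, hcard])
    exact h ▸ Subgroup.mem_top c
  rcases n with _ | n
  · refine ⟨1, by simp⟩
  · have hne : q ^ p ^ n ≠ 1 := by
      intro h
      have h1 := orderOf_dvd_of_pow_eq_one h
      rw [hq, Nat.pow_dvd_pow_iff_le_right hp.one_lt] at h1
      omega
    obtain ⟨r, hr⟩ := exists_hom_cyclic_apply_ne_one (C := Subgroup.zpowers q)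
      (by rw [hexp, hcard]) hne
    have : Fact p.Prime := ⟨hp⟩
    refine ⟨r, orderOf_eq_prime_pow (by rwa [map_pow] at hr) ?_⟩
    rw [← map_pow, ← hq, pow_orderOf_eq_one, map_one]

lemma IsQuotientSolitary.eq_range_pow {G : Type*} [CommGroup G] [Finite G] {p n : ℕ}
    (hp : p.Prime) {H : Subgroup G} (hH : IsQuotientSolitary H)
    (hexp : Monoid.exponent (G ⧸ H) = p ^ n) :
    H = (powMonoidHom (p ^ n) : G →* G).range := by
  obtain ⟨_, hsol⟩ := hH
  apply le_antisymm
  · intro x hx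
    by_contra hxP
    obtain ⟨q, hq⟩ := Monoid.exists_orderOf_eq_exponent (G := G ⧸ H)
      (Monoid.exponent_ne_zero.1 Monoid.exponent_ne_zero_of_finite)
    rw [hexp] at hq
    obtain ⟨r, hr⟩ := exists_hom_zpowers_generator hp hexp hq
    obtain ⟨θ, hθ⟩ := exists_hom_cyclic_of_notMem_range_pow (C := Subgroup.zpowers q)
      (a := x) (by rwa [Nat.card_zpowers, hq])
    obtain ⟨g, hg⟩ := QuotientGroup.mk'_surjective H q
    obtain ⟨k, hk⟩ := hr (θ g)
    -- `η` agrees with `θ` on `H` and kills the lift `g` of `q`.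
    let η : G →* Subgroup.zpowers q := θ / (r.comp (QuotientGroup.mk' H)) ^ k
    have hηg : η g = 1 := by
      change θ g / (r (QuotientGroup.mk' H g)) ^ k = 1
      rw [hg, div_eq_one]
      exact hk.symm
    have hπx : QuotientGroup.mk' H x = 1 := (QuotientGroup.eq_one_iff x).2 hx
    have hηx : η x = θ x := by
      change θ x / (r (QuotientGroup.mk' H x)) ^ k = θ x
      rw [hπx, map_one, one_zpow, div_one]
    let ψ : G →* G ⧸ H := QuotientGroup.mk' H * (Subgroup.zpowers q).subtype.comp η
    have hψ (y : G) : ψ y = QuotientGroup.mk' H y * (η y : G ⧸ H) := rfl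
    have hψg : ψ g = q := by rw [hψ, hg, hηg, Subgroup.coe_one, mul_one]
    have hsurj : Function.Surjective ψ := by
      intro y
      obtain ⟨y, rfl⟩ := QuotientGroup.mk'_surjective H y
      obtain ⟨j, hj⟩ := (η y).2
      refine ⟨y * g ^ (-j), ?_⟩
      have hj' : q ^ j = (η y : G ⧸ H) := hj
      rw [map_mul, map_zpow, hψg, hψ, ← hj', zpow_neg, mul_inv_cancel_right]
    have hker : ψ.ker = H :=
      hsol ψ.ker inferInstance ⟨QuotientGroup.quotientKerEquivOfSurjective ψ hsurj⟩
    have hx1 : ψ x = 1 := by rwa [← hker, MonoidHom.mem_ker] at hx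
    rw [hψ, hπx, one_mul, hηx] at hx1
    exact hθ (Subtype.ext hx1)
  · rintro _ ⟨x, rfl⟩
    rw [← QuotientGroup.eq_one_iff, powMonoidHom_apply, QuotientGroup.mk_pow, ← hexp]
    exact Monoid.pow_exponent_eq_one _

/-- For a nontrivial finite abelian p-group of exponent p^e, the quotient solitary
subgroups are exactly the terms of the Frattini series, which form a strictly
decreasing chain of length e from the whole group down to the trivial subgroup. -/
theorem qsol_eq_frattiniSeries {G : Type*} [CommGroup G] [Finite G] [Nontrivial G]
    (p e : ℕ) (hp : p.Prime) (hG : IsPGroup p G)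
    (he : Monoid.exponent G = p ^ e) :
    (∀ H : Subgroup G, IsQuotientSolitary H ↔ ∃ n ≤ e, H = frattiniSeries G n) ∧
    (∀ n < e, frattiniSeries G (n + 1) < frattiniSeries G n) ∧
    frattiniSeries G e = ⊥ := by
  simp only [frattiniSeries_eq_range_pow hp hG]
  refine ⟨fun H ↦ ⟨fun hH ↦ ?_, ?_⟩, fun n hn ↦ ?_, ?_⟩
  · have hdvd : Monoid.exponent (G ⧸ H) ∣ p ^ e := he ▸ Group.exponent_quotient_dvd H
    obtain ⟨n, hn, hexp⟩ := (Nat.dvd_prime_pow hp).1 hdvd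
    exact ⟨n, hn, hH.eq_range_pow hp hexp⟩
  · rintro ⟨n, -, rfl⟩
    exact isQuotientSolitary_range_pow _
  · refine lt_of_le_of_ne ?_ fun heq ↦ ?_
    · rintro _ ⟨x, rfl⟩
      exact ⟨x ^ p, by simp [pow_succ', pow_mul]⟩
    -- Raising to the power `p ^ (e - (n + 1))` kills the smaller subgroup, so if the two subgroups
    -- were equal, the exponent of `G` would divide `p ^ (e - 1)`.
    · have hdvd : Monoid.exponent G ∣ p ^ n * p ^ (e - (n + 1)) := by
        refine Monoid.exponent_dvd_of_forall_pow_eq_one fun x ↦ ?_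
        have hx : x ^ p ^ n ∈ (powMonoidHom (p ^ (n + 1)) : G →* G).range := heq ▸ ⟨x, rfl⟩
        obtain ⟨y, hy⟩ := hx
        rw [powMonoidHom_apply] at hy
        rw [pow_mul, ← hy, ← pow_mul, ← pow_add, Nat.add_sub_cancel' hn, ← he]
        exact Monoid.pow_exponent_eq_one y
      rw [he, ← pow_add, Nat.pow_dvd_pow_iff_le_right hp.one_lt] at hdvd
      omega
  · rw [eq_bot_iff]
    rintro _ ⟨x, rfl⟩
    rw [Subgroup.mem_bot, powMonoidHom_apply, ← he]
    exact Monoid.pow_exponent_eq_one x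
end

section
/- Let G be a nontrivial finite abelian p-group with exponent p^e. Then the set Sol(G) of solitary subgroups of G is totally ordered by inclusion and has exactly e + 1 elements, i.e. Sol(G) is a chain of length e. -/
/-- The layer `G[p ^ k]` of elements killed by `p ^ k`. -/
def torsionLayer (G : Type*) [CommGroup G] (p k : ℕ) : Subgroup G :=
  (powMonoidHom (p ^ k) : G →* G).ker

lemma mem_torsionLayer {G : Type*} [CommGroup G] {p k : ℕ} {g : G} :
    g ∈ torsionLayer G p k ↔ g ^ p ^ k = 1 := by
  simp [torsionLayer, MonoidHom.mem_ker]

lemma torsionLayer_mono {G : Type*} [CommGroup G] {p : ℕ} : Monotone (torsionLayer G p) := by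
  intro k l hkl g hg
  rw [mem_torsionLayer] at hg ⊢
  exact orderOf_dvd_iff_pow_eq_one.1
    ((orderOf_dvd_of_pow_eq_one hg).trans (pow_dvd_pow p hkl))

lemma isSolitary_torsionLayer {G : Type*} [CommGroup G] [Finite G] (p k : ℕ) :
    IsSolitary (torsionLayer G p k) := by
  rintro K ⟨f⟩
  refine Subgroup.eq_of_le_of_card_ge (fun g hg => ?_) (Nat.card_congr f.toEquiv).ge
  have h1 : (f ⟨g, hg⟩) ^ p ^ k = 1 := Subtype.ext (mem_torsionLayer.1 (f ⟨g, hg⟩).2)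
  rw [← map_pow, map_eq_one_iff f f.injective] at h1
  exact mem_torsionLayer.2 (congrArg Subtype.val h1)

lemma torsionLayer_injOn {G : Type*} [CommGroup G] [Finite G] {p e : ℕ} (hp : p.Prime)
    (he : Monoid.exponent G = p ^ e) : Set.InjOn (torsionLayer G p) (Set.Iic e) := by
  obtain ⟨g, hg⟩ := Monoid.exists_orderOf_eq_exponent
    (Monoid.ExponentExists.of_finite (G := G))
  rw [he] at hg
  have key : ∀ k ≤ e, ∀ l, torsionLayer G p k ≤ torsionLayer G p l → k ≤ l := by
    intro k hk l hkl
    have h1 : g ^ p ^ (e - k) ∈ torsionLayer G p k := by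
      rw [mem_torsionLayer, ← pow_mul, ← pow_add, Nat.sub_add_cancel hk, ← hg, pow_orderOf_eq_one]
    have h2 := hkl h1
    rw [mem_torsionLayer, ← pow_mul, ← pow_add, ← orderOf_dvd_iff_pow_eq_one, hg,
      Nat.pow_dvd_pow_iff_le_right hp.one_lt] at h2
    omega
  intro k hk l hl h
  exact le_antisymm (key k hk l h.le) (key l hl k h.ge)

/-- The only minimal nontrivial subgroup of a cyclic group of order `p ^ (j + 1)` is generated by
the `p ^ j`-th power of a generator, so `⟨z⟩` meets `C` trivially as soon as this power avoids
`C`. -/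
lemma zpowers_disjoint {G : Type*} [CommGroup G] {p j : ℕ} (hp : p.Prime) {z : G}
    (hz : z ^ p ^ (j + 1) = 1) {C : Subgroup G} (hC : z ^ p ^ j ∉ C) :
    Disjoint (Subgroup.zpowers z) C := by
  rw [Subgroup.disjoint_def]
  intro w hw hwC
  obtain ⟨i, rfl⟩ := Subgroup.mem_zpowers_iff.1 hw
  -- Modulo `C` the element `z` still has order `p ^ (j + 1)`.
  have ho : orderOf (z : G ⧸ C) = p ^ (j + 1) := by
    have : Fact p.Prime := ⟨hp⟩
    apply orderOf_eq_prime_pow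
    · rwa [← QuotientGroup.mk_pow, QuotientGroup.eq_one_iff]
    · rw [← QuotientGroup.mk_pow, hz, QuotientGroup.mk_one]
  have h1 : (z : G ⧸ C) ^ i = 1 := by
    rwa [← QuotientGroup.mk_zpow, QuotientGroup.eq_one_iff]
  rw [← orderOf_dvd_iff_zpow_eq_one, ho] at h1
  obtain ⟨m, rfl⟩ := h1
  rw [zpow_mul, zpow_natCast, hz, one_zpow]

lemma nonempty_sup_mulEquiv_prod {G : Type*} [CommGroup G] {A C : Subgroup G}
    (h : Disjoint A C) : Nonempty ((A ⊔ C : Subgroup G) ≃* A × C) := by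
  have hinj : Function.Injective (A.subtype.coprod C.subtype) := by
    rw [injective_iff_map_eq_one]
    rintro ⟨a, c⟩ hac
    simp only [MonoidHom.coprod_apply, Subgroup.subtype_apply] at hac
    obtain ⟨ha, hc⟩ := Subgroup.disjoint_iff_mul_eq_one.1 h a.2 c.2 hac
    exact Prod.ext (Subtype.ext ha) (Subtype.ext hc)
  have hr : (A.subtype.coprod C.subtype).range = A ⊔ C := by
    ext g
    simp [MonoidHom.mem_range, Subgroup.mem_sup]
  exact ⟨((MonoidHom.ofInjective hinj).trans (MulEquiv.subgroupCongr hr)).symm⟩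

/-- A cyclic subgroup of maximal order of a finite abelian `p`-group has a complement, namely the
kernel of a complex character which is faithful on it. -/
lemma exists_complement {H : Type*} [CommGroup H] [Finite H] {p j : ℕ} (hp : p.Prime)
    (he : Monoid.exponent H = p ^ (j + 1)) {x : H} (hx : orderOf x = p ^ (j + 1)) :
    ∃ C : Subgroup H, x ^ p ^ j ∉ C ∧ Subgroup.zpowers x ⊔ C = ⊤ := by
  have hne : x ^ p ^ j ≠ 1 := by
    intro h
    have := orderOf_dvd_of_pow_eq_one h
    rw [hx, Nat.pow_dvd_pow_iff_le_right hp.one_lt] at this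
    omega
  have : NeZero (Monoid.exponent H) := ⟨by rw [he]; exact pow_ne_zero _ hp.ne_zero⟩
  obtain ⟨χ, hχ⟩ := CommGroup.exists_apply_ne_one_of_hasEnoughRootsOfUnity H ℂ hne
  have : Fact p.Prime := ⟨hp⟩
  have ho : orderOf (χ x) = p ^ (j + 1) := by
    apply orderOf_eq_prime_pow
    · rwa [← map_pow]
    · rw [← map_pow, ← hx, pow_orderOf_eq_one, map_one]
  have hprim : IsPrimitiveRoot ((χ x : ℂˣ) : ℂ) (p ^ (j + 1)) := by
    rw [IsPrimitiveRoot.coe_units_iff, ← ho]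
    exact IsPrimitiveRoot.orderOf _
  have : NeZero (p ^ (j + 1)) := ⟨pow_ne_zero _ hp.ne_zero⟩
  refine ⟨χ.ker, hχ, eq_top_iff.2 fun h _ => ?_⟩
  have hh : ((χ h : ℂˣ) : ℂ) ^ p ^ (j + 1) = 1 := by
    rw [← Units.val_pow_eq_pow_val, ← map_pow, ← he, Monoid.pow_exponent_eq_one, map_one,
      Units.val_one]
  obtain ⟨i, -, hi⟩ := hprim.eq_pow_of_pow_eq_one hh
  have hi' : χ x ^ i = χ h := Units.ext (by simpa using hi)
  refine Subgroup.mem_sup.2 ⟨x ^ i, Subgroup.npow_mem_zpowers x i, (x ^ i)⁻¹ * h, ?_, by simp⟩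
  rw [MonoidHom.mem_ker, map_mul, map_inv, map_pow, hi', inv_mul_cancel]

lemma eq_torsionLayer_of_isSolitary {G : Type*} [CommGroup G] [Finite G] {p k : ℕ}
    (hp : p.Prime) {H : Subgroup G} (hH : IsSolitary H) (he : Monoid.exponent H = p ^ k) :
    H = torsionLayer G p k := by
  apply le_antisymm
  · intro h hh
    have := Monoid.pow_exponent_eq_one (⟨h, hh⟩ : H)
    rw [he] at this
    exact mem_torsionLayer.2 (congrArg Subtype.val this)
  intro y hy
  rw [mem_torsionLayer] at hy
  rcases k with _ | j
  · rw [pow_zero, pow_one] at hy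
    exact hy ▸ H.one_mem
  by_contra hyH
  obtain ⟨⟨x, hxH⟩, hx⟩ := Monoid.exists_orderOf_eq_exponent
    (Monoid.ExponentExists.of_finite (G := H))
  rw [he] at hx
  obtain ⟨C', hxC', hsup'⟩ := exists_complement hp he hx
  rw [Subgroup.orderOf_mk] at hx
  let C := C'.map H.subtype
  have hxC : x ^ p ^ j ∉ C := by
    rintro ⟨c, hc, hcx⟩
    exact hxC' ((Subtype.ext hcx : c = ⟨x, hxH⟩ ^ p ^ j) ▸ hc)
  have hsup : Subgroup.zpowers x ⊔ C = H := by
    have := congrArg (Subgroup.map H.subtype) hsup'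
    rw [Subgroup.map_sup, MonoidHom.map_zpowers] at this
    simpa [← MonoidHom.range_eq_map] using this
  have hx1 : x ^ p ^ (j + 1) = 1 := by rw [← hx, pow_orderOf_eq_one]
  obtain ⟨z, hzH, hz1, hzC⟩ : ∃ z, z ∉ H ∧ z ^ p ^ (j + 1) = 1 ∧ z ^ p ^ j ∉ C := by
    have hxy : x * y ∉ H := fun h => hyH ((H.mul_mem_cancel_left hxH).1 h)
    by_cases h : (x * y) ^ p ^ j ∈ C
    · refine ⟨x * (x * y), fun h' => hxy ((H.mul_mem_cancel_left hxH).1 h'), ?_, fun h' => ?_⟩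
      · simp [mul_pow, hx1, hy]
      · rw [mul_pow x] at h'
        exact hxC ((C.mul_mem_cancel_right h).1 h')
    · exact ⟨x * y, hxy, by simp [mul_pow, hx1, hy], h⟩
  have hoz : orderOf z = p ^ (j + 1) := by
    have : Fact p.Prime := ⟨hp⟩
    exact orderOf_eq_prime_pow (fun h => hzC (h ▸ C.one_mem)) hz1
  obtain ⟨f⟩ := nonempty_sup_mulEquiv_prod (zpowers_disjoint hp hz1 hzC)
  obtain ⟨g⟩ := nonempty_sup_mulEquiv_prod (zpowers_disjoint hp hx1 hxC)
  have hcard : Nat.card (Subgroup.zpowers z) = Nat.card (Subgroup.zpowers x) := by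
    rw [Nat.card_zpowers, Nat.card_zpowers, hoz, hx]
  have hK : Subgroup.zpowers z ⊔ C = H :=
    hH _ ⟨(f.trans ((mulEquivOfCyclicCardEq hcard).prodCongr (MulEquiv.refl C))).trans
      (g.symm.trans (MulEquiv.subgroupCongr hsup))⟩
  exact hzH (hK ▸ Subgroup.mem_sup_left (Subgroup.mem_zpowers z))

/-- For a nontrivial finite abelian p-group of exponent p^e, the solitary subgroups form
a chain of length e: they are totally ordered by inclusion and there are exactly
e + 1 of them. -/
theorem sol_isChain_card {G : Type*} [CommGroup G] [Finite G] [Nontrivial G]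
    (p e : ℕ) (hp : p.Prime) (hG : IsPGroup p G)
    (he : Monoid.exponent G = p ^ e) :
    IsChain (· ≤ ·) {H : Subgroup G | IsSolitary H} ∧
    Set.ncard {H : Subgroup G | IsSolitary H} = e + 1 := by
  have hset : {H : Subgroup G | IsSolitary H} = torsionLayer G p '' Set.Iic e := by
    ext H
    constructor
    · intro hH
      have hd : Monoid.exponent H ∣ p ^ e :=
        he ▸ Monoid.exponent_dvd_of_monoidHom H.subtype H.subtype_injective
      obtain ⟨k, hk, hk'⟩ := (Nat.dvd_prime_pow hp).1 hd
      exact ⟨k, hk, (eq_torsionLayer_of_isSolitary hp hH hk').symm⟩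
    · rintro ⟨k, -, rfl⟩
      exact isSolitary_torsionLayer p k
  rw [hset]
  constructor
  · rintro _ ⟨k, -, rfl⟩ _ ⟨l, -, rfl⟩ -
    exact (le_total k l).imp (fun h => torsionLayer_mono h) (fun h => torsionLayer_mono h)
  · rw [(torsionLayer_injOn hp he).ncard_image, ← Finset.coe_Iic,
      Set.ncard_coe_finset, Nat.card_Iic]
end

section
/- A finite nilpotent group is quotient solitary free if and only if it is elementary abelian; moreover, every finite quotient solitary free group is either perfect or elementary abelian. -/
/-- A group is *elementary abelian* if it is abelian and all its nontrivial elements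
have order p for a fixed prime p. -/
def IsElementaryAbelian (G : Type*) [Group G] : Prop :=
  (∀ a b : G, a * b = b * a) ∧ ∃ p : ℕ, p.Prime ∧ ∀ x : G, x ≠ 1 → orderOf x = p

/-- The preimage in `G` of the `p`-th powers of the abelianization; for prime `p`, this is the
smallest normal subgroup with elementary abelian quotient of exponent dividing `p`. -/
def elemKernel (G : Type*) [Group G] (p : ℕ) : Subgroup G :=
  (powMonoidHom p : Abelianization G →* Abelianization G).range.comap Abelianization.of

instance (G : Type*) [Group G] (p : ℕ) : (elemKernel G p).Normal := by
  unfold elemKernel; infer_instance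

section

variable {G : Type*} [Group G] {p : ℕ}

lemma pow_mem_elemKernel (x : G) : x ^ p ∈ elemKernel G p :=
  ⟨Abelianization.of x, by simp⟩

open scoped commutatorElement in
lemma commutatorElement_mem_elemKernel (x y : G) : ⁅x, y⁆ ∈ elemKernel G p :=
  ⟨1, by
    rw [map_one, map_commutatorElement, commutatorElement_eq_one_iff_mul_comm.2 (mul_comm _ _)]⟩

/-- Every homomorphism to a group that is commutative of exponent dividing `p` kills
`elemKernel G p`. -/
lemma elemKernel_le_ker {A : Type*} [Group A] (hc : ∀ a b : A, a * b = b * a)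
    (hp : ∀ a : A, a ^ p = 1) (f : G →* A) : elemKernel G p ≤ f.ker := by
  rintro x ⟨y, hy⟩
  let _ : CommGroup A := { ‹Group A› with mul_comm := hc }
  have h : Abelianization.lift f (Abelianization.of x) = 1 := by
    rw [← hy, powMonoidHom_apply, map_pow, hp]
  simpa using h

lemma quotient_elemKernel_comm (a b : G ⧸ elemKernel G p) : a * b = b * a := by
  induction a using QuotientGroup.induction_on with | H x => ?_
  induction b using QuotientGroup.induction_on with | H y => ?_
  rw [← commutatorElement_eq_one_iff_mul_comm]
  exact (QuotientGroup.eq_one_iff _).2 (commutatorElement_mem_elemKernel x y)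

lemma quotient_elemKernel_pow (a : G ⧸ elemKernel G p) : a ^ p = 1 := by
  induction a using QuotientGroup.induction_on with | H x => ?_
  exact (QuotientGroup.eq_one_iff _).2 (pow_mem_elemKernel x)

lemma eq_of_quotient_mulEquiv [Finite G] {K : Subgroup G} [K.Normal]
    (e : (G ⧸ K) ≃* (G ⧸ elemKernel G p)) : K = elemKernel G p := by
  have hle : elemKernel G p ≤ K := by
    have h := elemKernel_le_ker quotient_elemKernel_comm quotient_elemKernel_pow
      (e.toMonoidHom.comp (QuotientGroup.mk' K))
    intro x hx
    simpa [MonoidHom.mem_ker] using h hx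
  have hidx : K.index = (elemKernel G p).index := Nat.card_congr e.toEquiv
  by_contra hne
  exact (Subgroup.index_strictAnti (lt_of_le_of_ne hle (Ne.symm hne))).ne hidx

lemma isQuotientSolitary_elemKernel [Finite G] : IsQuotientSolitary (elemKernel G p) :=
  ⟨inferInstance, fun _ _ ⟨e⟩ => eq_of_quotient_mulEquiv e⟩

lemma elemKernel_ne_top [Finite G] (hp : p.Prime) (hd : p ∣ Nat.card (Abelianization G)) :
    elemKernel G p ≠ ⊤ := by
  intro h
  have := Fact.mk hp
  have hsurj : Function.Surjective (powMonoidHom p : Abelianization G →* Abelianization G) := by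
    intro a
    obtain ⟨x, rfl⟩ := QuotientGroup.mk_surjective a
    exact (h ▸ Subgroup.mem_top x : x ∈ elemKernel G p)
  have : Finite (Abelianization G) := inferInstanceAs (Finite (G ⧸ commutator G))
  obtain ⟨a, ha⟩ := exists_prime_orderOf_dvd_card' p hd
  have h1 : a = 1 := Finite.injective_iff_surjective.2 hsurj (by
    simp only [powMonoidHom_apply, one_pow, ← ha, pow_orderOf_eq_one])
  rw [h1, orderOf_one] at ha
  exact hp.one_lt.ne ha

lemma isElementaryAbelian_of_elemKernel_eq_bot (hp : p.Prime) (h : elemKernel G p = ⊥) :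
    IsElementaryAbelian G := by
  refine ⟨fun a b => ?_, p, hp, fun x hx => ?_⟩
  · have := commutatorElement_mem_elemKernel (p := p) a b
    rwa [h, Subgroup.mem_bot, commutatorElement_eq_one_iff_mul_comm] at this
  · have := Fact.mk hp
    have := pow_mem_elemKernel (p := p) x
    rw [h, Subgroup.mem_bot] at this
    exact orderOf_eq_prime this hx

lemma commutator_eq_top_or_isElementaryAbelian [Finite G]
    (h : ∀ H : Subgroup G, IsQuotientSolitary H → H = ⊥ ∨ H = ⊤) :
    commutator G = ⊤ ∨ IsElementaryAbelian G := by
  refine or_iff_not_imp_left.2 fun hG => ?_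
  have hcard : Nat.card (Abelianization G) ≠ 1 := fun h1 => hG (Subgroup.index_eq_one.1 h1)
  obtain ⟨p, hp, hd⟩ := Nat.exists_prime_and_dvd hcard
  exact isElementaryAbelian_of_elemKernel_eq_bot hp
    ((h _ isQuotientSolitary_elemKernel).resolve_right (elemKernel_ne_top hp hd))

end

lemma Submodule.eq_bot_or_eq_top_of_map_eq {K V : Type*} [Field K] [AddCommGroup V] [Module K V]
    (W : Submodule K V) (hW : ∀ e : V ≃ₗ[K] V, ∀ x ∈ W, e x ∈ W) : W = ⊥ ∨ W = ⊤ := by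
  by_contra! hne
  obtain ⟨a, haW, ha⟩ := W.ne_bot_iff.1 hne.1
  obtain ⟨b, hb⟩ : ∃ b, b ∉ W := by
    by_contra! h
    exact hne.2 (Submodule.eq_top_iff'.2 h)
  obtain ⟨f, hf⟩ : ∃ f : Module.Dual K V, f a ≠ 0 := by
    by_contra! h
    exact ha ((Module.forall_dual_apply_eq_zero_iff K a).1 h)
  -- Correct `b` by a multiple of `a` to land in the kernel of `f` without entering `W`; the
  -- transvection along this vector then moves `a` out of `W`.
  have hc : f (b - (f b / f a) • a) = 0 := by
    simp [hf]
  have hmem := hW (LinearEquiv.transvection hc) a haW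
  rw [LinearEquiv.transvection.apply, W.add_mem_iff_right haW, W.smul_mem_iff hf,
    W.sub_mem_iff_left (W.smul_mem _ haW)] at hmem
  exact hb hmem

lemma IsQuotientSolitary.apply_mem {G : Type*} [Group G] {H : Subgroup G}
    (hH : IsQuotientSolitary H) (e : G ≃* G) {x : G} (hx : x ∈ H) : e x ∈ H := by
  obtain ⟨hn, h⟩ := hH
  have hn' : (H.map (e : G →* G)).Normal := hn.map _ e.surjective
  have := h (H.map (e : G →* G)) hn' ⟨(QuotientGroup.congr H _ e rfl).symm⟩
  rw [← this]
  exact ⟨x, hx, rfl⟩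

lemma IsElementaryAbelian.eq_bot_or_eq_top {G : Type*} [Group G] (hG : IsElementaryAbelian G)
    {H : Subgroup G} (hH : IsQuotientSolitary H) : H = ⊥ ∨ H = ⊤ := by
  obtain ⟨hc, p, hp, ho⟩ := hG
  have := Fact.mk hp
  let _ : CommGroup G := { ‹Group G› with mul_comm := hc }
  have hpow : ∀ x : G, x ^ p = 1 := fun x => by
    by_cases hx : x = 1
    · simp [hx]
    · rw [← ho x hx, pow_orderOf_eq_one]
  let _ : Module (ZMod p) (Additive G) := AddCommGroup.zmodModule (n := p) fun x => hpow x.toMul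
  rcases (AddSubgroup.toZModSubmodule p (Subgroup.toAddSubgroup H)).eq_bot_or_eq_top_of_map_eq
    (fun e x hx => hH.apply_mem (MulEquiv.toAdditive.symm e.toAddEquiv) hx) with h | h
  · left
    exact (Subgroup.eq_bot_iff_forall H).2 fun x hx => (Submodule.eq_bot_iff _).1 h (.ofMul x) hx
  · right
    exact (Subgroup.eq_top_iff' H).2 fun x => Submodule.eq_top_iff'.1 h (.ofMul x)


/-- A finite nilpotent group is quotient solitary free iff it is elementary abelian;
moreover every finite quotient solitary free group is perfect or elementary abelian. -/
theorem quotientSolitaryFree_characterization :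
    (∀ (G : Type) [Group G] [Finite G], Group.IsNilpotent G →
      ((∀ H : Subgroup G, IsQuotientSolitary H → H = ⊥ ∨ H = ⊤) ↔
        IsElementaryAbelian G)) ∧
    (∀ (G : Type) [Group G] [Finite G],
      (∀ H : Subgroup G, IsQuotientSolitary H → H = ⊥ ∨ H = ⊤) →
        commutator G = ⊤ ∨ IsElementaryAbelian G) := by
  refine ⟨fun G _ _ hnil => ⟨fun h => ?_, fun hG H hH => hG.eq_bot_or_eq_top hH⟩,
    fun G _ _ h => commutator_eq_top_or_isElementaryAbelian h⟩
  rcases commutator_eq_top_or_isElementaryAbelian h with hperf | hG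
  · rcases subsingleton_or_nontrivial G with hs | hs
    · exact ⟨fun _ _ => Subsingleton.elim _ _, 2, Nat.prime_two,
        fun x hx => absurd (Subsingleton.elim x 1) hx⟩
    · exact absurd hperf (Group.IsSolvable.commutator_lt_top_of_nontrivial G).ne
  · exact hG
end

section
/- Let n ≥ 3 be an odd integer and let D_{2n} = ⟨x, y ∣ xⁿ = y² = 1, yxy = x⁻¹⟩ be the dihedral group of order 2n. Then every normal subgroup of D_{2n} is quotient solitary, i.e. QSol(D_{2n}) = N(D_{2n}). -/
/-- The inclusion from left to right is Lagrange; equality follows because a cyclic group has at most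
`d` solutions of `a ^ d = 1`. -/
theorem cyclic_subgroup_eq_setOf_pow {C : Type*} [Group C] [Finite C] [IsCyclic C]
    (H : Subgroup C) : (H : Set C) = {a | a ^ Nat.card H = 1} := by
  classical
  have := Fintype.ofFinite C
  refine Set.eq_of_subset_of_ncard_le (fun x hx => ?_) ?_ (Set.toFinite _)
  · have h := pow_card_eq_one' (G := H) (x := ⟨x, hx⟩)
    exact congrArg Subtype.val h
  · have h := IsCyclic.card_pow_eq_one_le (α := C) (n := Nat.card H) Nat.card_pos
    rw [← Set.ncard_coe_finset] at h
    rw [Finset.coe_filter_univ] at h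
    exact h

theorem cyclic_subgroup_eq_of_card {C : Type*} [Group C] [Finite C] [IsCyclic C]
    {H K : Subgroup C} (h : Nat.card K = Nat.card H) : K = H :=
  SetLike.coe_injective <| by
    rw [cyclic_subgroup_eq_setOf_pow, cyclic_subgroup_eq_setOf_pow, h]

theorem dihedral_normal_eq_top_or_le {n : ℕ} (hodd : Odd n) (H : Subgroup (DihedralGroup n))
    (hH : H.Normal) : H = ⊤ ∨ H ≤ Subgroup.zpowers (DihedralGroup.r 1) := by
  by_cases h : ∃ i, DihedralGroup.sr i ∈ H
  · left
    obtain ⟨i, hi⟩ := h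
    have hsr : ∀ j, DihedralGroup.sr j ∈ H := by
      intro j
      obtain ⟨k, hk⟩ := hodd
      -- Modulo `n = 2 * k + 1`, the inverse of `2` is `k + 1`.
      have h2 : (2 : ZMod n) * k + 1 = 0 := by
        have := ZMod.natCast_self n
        rw [hk] at this ⊢
        exact_mod_cast this
      have hc := hH.conj_mem _ hi (DihedralGroup.r ((i - j) * (k + 1)))
      rw [DihedralGroup.r_mul_sr, DihedralGroup.inv_r, DihedralGroup.sr_mul_r] at hc
      convert hc using 2
      linear_combination (i - j) * h2
    rw [Subgroup.eq_top_iff']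
    rintro (j | j)
    · simpa using H.mul_mem (hsr 0) (hsr j)
    · exact hsr j
  · right
    rintro (j | j) hj
    · obtain ⟨m, rfl⟩ := ZMod.intCast_surjective j
      exact ⟨m, DihedralGroup.r_one_zpow m⟩
    · exact absurd ⟨j, hj⟩ h

/-- In a dihedral group of order 2n with n ≥ 3 odd, every normal subgroup is quotient
solitary. -/
theorem dihedral_odd_qsol_eq_normal (n : ℕ) (hn : 3 ≤ n) (hodd : Odd n) :
    ∀ H : Subgroup (DihedralGroup n), H.Normal → IsQuotientSolitary H := by
  intro H hH
  refine ⟨hH, fun K hK ⟨e⟩ => ?_⟩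
  have : NeZero n := ⟨by omega⟩
  have hidx : K.index = H.index := Nat.card_congr e.toEquiv
  have hcard : Nat.card K = Nat.card H := by
    have h1 := K.index_mul_card
    rw [← H.index_mul_card, hidx] at h1
    exact Nat.eq_of_mul_eq_mul_left (Nat.pos_of_ne_zero H.index_ne_zero_of_finite) h1
  rcases dihedral_normal_eq_top_or_le hodd H hH with rfl | hHR
  · exact Subgroup.eq_top_of_card_eq K (by rw [hcard, Subgroup.card_top])
  rcases dihedral_normal_eq_top_or_le hodd K hK with rfl | hKR
  · exact (Subgroup.eq_top_of_card_eq H (by rw [← hcard, Subgroup.card_top])).symm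
  have hsub := cyclic_subgroup_eq_of_card
    (K := K.subgroupOf (Subgroup.zpowers (DihedralGroup.r 1)))
    (H := H.subgroupOf (Subgroup.zpowers (DihedralGroup.r 1))) (by
      rw [Nat.card_congr (Subgroup.subgroupOfEquivOfLe hKR).toEquiv,
        Nat.card_congr (Subgroup.subgroupOfEquivOfLe hHR).toEquiv, hcard])
  rwa [Subgroup.subgroupOf_inj, inf_eq_left.2 hKR, inf_eq_left.2 hHR] at hsub
end
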